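/- For every sequence (μ_k)_{k∈ℕ} of real numbers there exists a multiplicative S-cocycle W = (W_t)_{t∈ℝ} on L²(ℝ), Markovian with respect to ξ, such that: (i) W_t − I is a Hilbert–Schmidt operator for every t ∈ ℝ, i.e. ∑_i ‖(W_t − I) e_i‖² < ∞ for some (equivalently, any) Hilbert basis (e_i) of L²(ℝ); and (ii) there is an orthonormal family (g_k)_{k∈ℕ} in H_{0]} with W_{-t} S_{-t} g_k = e^{i μ_k t} g_k for all t ≥ 0 and all k; i.e. the unitary part of the Wold decomposition of the perturbed isometric semigroup (W_{-t} S_{-t}|_{H_{0]}})_{t≥0} has the prescribed pure point spectrum. -/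

import Mathlib

open Filter Topology MeasureTheory

noncomputable section

/-- `H_{0]}`: the elements of `L²(ℝ)` vanishing a.e. on `(-∞, 0)`. -/
def pastSet : Set (Lp ℂ 2 (volume : Measure ℝ)) :=
  {f | (f : ℝ → ℂ) =ᵐ[(volume : Measure ℝ).restrict (Set.Iio (0 : ℝ))] 0}

/-- `H_{[t}` (`t ≥ 0`): the elements of `L²(ℝ)` vanishing a.e. on `(-t, ∞)`;
this is the closed span of the increments `ξ_s - ξ_r`, `s, r ≥ t`, of the cocycle
`ξ_t = 1_{[-t,0]}`, and `H_{[t} = S_t H_{[0}`. -/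
def futSet (t : ℝ) : Set (Lp ℂ 2 (volume : Measure ℝ)) :=
  {f | (f : ℝ → ℂ) =ᵐ[(volume : Measure ℝ).restrict (Set.Ioi (-t))] 0}

open scoped InnerProduct lp

/-!
Cutting the character `x ↦ exp (-i μ_k x)` off to the dyadic intervals `[2 ^ m, 2 ^ (m + 1))`
gives, after normalisation, an orthonormal family `φ (k, n)` in `H_{0]}` of approximate
eigenvectors: the defects `‖S_t φ (k, n) - exp (-i μ_k t) φ (k, n)‖` are square-summable.
Let `R` be the isometry that shifts `φ (k, n)` to `φ (k, n + 1)` and `M_t` the unitary that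
multiplies `φ (k, n)` by `exp (-i μ_k t)`, both being the identity on the orthogonal complement of
the family. As `M_t` commutes with `R`, `U_t = R S_t R* + M_t (1 - R R*)` is a unitary group; the
vectors `φ (k, 0)`, which span the kernel of `R*`, are its eigenvectors. With `X = S_t - M_t`,
`U_t - S_t = (R - 1) X R* + X (R - 1)*`, in which `R - 1` factors through the span of the `φ (k, n)`
on both sides and `X` and `X*` are Hilbert–Schmidt on that span, so `U_t - S_t` is
Hilbert–Schmidt. The cocycle is `W_t = U_t S_{-t}`; it is Markovian because `U_t f = S_t f` as soon
as `f` and `S_t f` are orthogonal to the family.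
-/

section HilbertSpace

variable {𝕜 ι : Type*} [RCLike 𝕜]
variable {E : Type*} [NormedAddCommGroup E] [InnerProductSpace 𝕜 E]
variable {F : Type*} [NormedAddCommGroup F] [InnerProductSpace 𝕜 F]
variable {G : Type*} [NormedAddCommGroup G] [InnerProductSpace 𝕜 G]

lemma hasSum_sq_norm_inner_hilbertBasis (b : HilbertBasis ι 𝕜 E) (x : E) :
    HasSum (fun i => ‖inner 𝕜 (b i) x‖ ^ 2) (‖x‖ ^ 2) := by
  have h := (b.hasSum_inner_mul_inner x x).mapL RCLike.reCLM
  simpa only [← inner_conj_symm x (b _), RCLike.conj_mul, inner_self_eq_norm_sq_to_K,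
    ← RCLike.ofReal_pow, RCLike.reCLM_apply, RCLike.ofReal_re] using h

lemma continuousLinearMap_ext_hilbertBasis (b : HilbertBasis ι 𝕜 E) {T T' : E →L[𝕜] F}
    (h : ∀ i, T (b i) = T' (b i)) : T = T' :=
  ContinuousLinearMap.ext_on (Submodule.dense_iff_topologicalClosure_eq_top.mpr b.dense_span)
    (Set.forall_mem_range.mpr h)

lemma countable_of_orthonormal [TopologicalSpace.SeparableSpace E] {v : ι → E}
    (hv : Orthonormal 𝕜 v) : Countable ι := by
  have hdist : ∀ i j, i ≠ j → dist (v i) (v j) ^ 2 = 2 := fun i j hij => by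
    rw [dist_eq_norm, @norm_sub_sq 𝕜, hv.2 hij, hv.1 i, hv.1 j]
    norm_num
  have hballs : Pairwise (Function.onFun Disjoint fun i => Metric.ball (v i) (1 / 2)) :=
    fun i j hij => Metric.ball_disjoint_ball <| by
      nlinarith [hdist i j hij, dist_nonneg (x := v i) (y := v j)]
  exact hballs.countable_of_isOpen_disjoint (fun _ => Metric.isOpen_ball)
    fun i => Metric.nonempty_ball.mpr one_half_pos

theorem nonempty_hilbertBasis_nat [CompleteSpace E] [TopologicalSpace.SeparableSpace E]
    (hE : ¬ FiniteDimensional 𝕜 E) : Nonempty (HilbertBasis ℕ 𝕜 E) := by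
  obtain ⟨w, b, -⟩ := exists_hilbertBasis 𝕜 E
  have : Countable w := countable_of_orthonormal b.orthonormal
  have : Infinite w := by
    by_contra hw
    have : Finite w := not_infinite_iff_finite.mp hw
    have := Fintype.ofFinite w
    exact hE b.toOrthonormalBasis.toBasis.finiteDimensional_of_finite
  obtain ⟨e⟩ : Nonempty (ℕ ≃ w) := nonempty_equiv_of_countable
  refine ⟨HilbertBasis.mk (b.orthonormal.comp e e.injective) ?_⟩
  rw [e.surjective.range_comp, b.dense_span]

lemma continuous_apply_of_hilbertBasis {X : Type*} [TopologicalSpace X] (b : HilbertBasis ι 𝕜 E)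
    {T : X → E →ₗᵢ[𝕜] F} (hT : ∀ i, Continuous fun t => T t (b i)) (x : E) :
    Continuous fun t => T t x := by
  have hspan : ∀ y ∈ Submodule.span 𝕜 (Set.range b), Continuous fun t => T t y := fun y hy => by
    induction hy using Submodule.span_induction with
    | mem y hy =>
      obtain ⟨i, rfl⟩ := hy
      exact hT i
    | zero => simpa only [map_zero] using continuous_const
    | add y z _ _ hy hz =>
      simp only [map_add]
      exact hy.add hz
    | smul a y _ hy =>
      simp only [map_smul]
      exact hy.const_smul a
  have hjoint : Continuous fun p : E × X => T p.2 p.1 :=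
    continuous_prod_of_dense_continuous_lipschitzWith _ 1
      (Submodule.dense_iff_topologicalClosure_eq_top.mpr b.dense_span) hspan
      fun t => (T t).isometry.lipschitz
  exact hjoint.comp (Continuous.prodMk_right x)

lemma continuous_linearIsometry_apply {X : Type*} [TopologicalSpace X] {T : X → E →ₗᵢ[𝕜] F}
    (hT : ∀ x, Continuous fun t => T t x) {f : X → E} (hf : Continuous f) :
    Continuous fun t => T t (f t) :=
  (continuous_prod_of_continuous_lipschitzWith (fun p : E × X => T p.2 p.1) 1 hT
    fun t => (T t).isometry.lipschitz).comp (hf.prodMk continuous_id)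

/-- Hilbert–Schmidt operators, as those that map every orthonormal set to a square-summable
family; quantifying over subsets instead of indexed families keeps the definition in one
universe. -/
def IsHilbertSchmidt (T : E →L[𝕜] F) : Prop :=
  ∀ s : Set E, Orthonormal 𝕜 ((↑) : s → E) → Summable fun x : s => ‖T x‖ ^ 2

namespace IsHilbertSchmidt

lemma summable {T : E →L[𝕜] F} (hT : IsHilbertSchmidt T) {v : ι → E} (hv : Orthonormal 𝕜 v) :
    Summable fun i => ‖T (v i)‖ ^ 2 :=
  (Equiv.ofInjective v hv.linearIndependent.injective).summable_iff.mpr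
    (hT (Set.range v) hv.toSubtypeRange)

lemma clm_comp {T : E →L[𝕜] F} (hT : IsHilbertSchmidt T) (A : F →L[𝕜] G) :
    IsHilbertSchmidt (A ∘L T) := fun s hs =>
  .of_nonneg_of_le (fun _ => sq_nonneg _)
    (fun x => by
      rw [← mul_pow]
      exact pow_le_pow_left₀ (norm_nonneg _) (A.le_opNorm (T x)) 2)
    ((hT s hs).mul_left (‖A‖ ^ 2))

lemma add {T T' : E →L[𝕜] F} (hT : IsHilbertSchmidt T) (hT' : IsHilbertSchmidt T') :
    IsHilbertSchmidt (T + T') := fun s hs =>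
  .of_nonneg_of_le (fun _ => sq_nonneg _)
    (fun x => (pow_le_pow_left₀ (norm_nonneg _) (norm_add_le (T x) (T' x)) 2).trans add_sq_le)
    (((hT s hs).add (hT' s hs)).mul_left 2)

variable [CompleteSpace E] [CompleteSpace F]

lemma adjoint_of_hilbertBasis {T : E →L[𝕜] F} (b : HilbertBasis ι 𝕜 E)
    (hT : Summable fun i => ‖T (b i)‖ ^ 2) : IsHilbertSchmidt (T†) := fun s hs => by
  have hdouble : Summable fun p : ι × s => ‖inner 𝕜 (p.2 : F) (T (b p.1))‖ ^ 2 := by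
    rw [summable_prod_of_nonneg fun _ => sq_nonneg _]
    exact ⟨fun i => hs.inner_products_summable (T (b i)),
      .of_nonneg_of_le (fun i => tsum_nonneg fun _ => sq_nonneg _)
        (fun i => hs.tsum_inner_products_le (T (b i))) hT⟩
  refine hdouble.prod_symm.prod.congr fun y => ?_
  rw [← (hasSum_sq_norm_inner_hilbertBasis b ((T†) y)).tsum_eq]
  simp only [Prod.swap_prod_mk, ContinuousLinearMap.adjoint_inner_right, norm_inner_symm (y : F)]

lemma adjoint {T : E →L[𝕜] F} (hT : IsHilbertSchmidt T) : IsHilbertSchmidt (T†) := by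
  obtain ⟨w, b, -⟩ := exists_hilbertBasis 𝕜 E
  exact adjoint_of_hilbertBasis b (hT.summable b.orthonormal)

lemma of_hilbertBasis {T : E →L[𝕜] F} (b : HilbertBasis ι 𝕜 E)
    (hT : Summable fun i => ‖T (b i)‖ ^ 2) : IsHilbertSchmidt T := by
  simpa only [ContinuousLinearMap.adjoint_adjoint] using (adjoint_of_hilbertBasis b hT).adjoint

lemma comp_clm [CompleteSpace G] {T : F →L[𝕜] G} (hT : IsHilbertSchmidt T) (A : E →L[𝕜] F) :
    IsHilbertSchmidt (T ∘L A) := by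
  simpa only [ContinuousLinearMap.adjoint_comp, ContinuousLinearMap.adjoint_adjoint]
    using (hT.adjoint.clm_comp (A†)).adjoint

end IsHilbertSchmidt

section BlockOperator

variable [CompleteSpace E] [CompleteSpace F]

/-- The operator on `F` that acts as `T` on the range of `V`, identified with `E` when `V` is an
isometry, and as `M` on its orthogonal complement. -/
def blockOperator (V : E →L[𝕜] F) (T : E →L[𝕜] E) (M : F →L[𝕜] F) : F →L[𝕜] F :=
  V ∘L T ∘L V† + M ∘L (1 - V ∘L V†)

variable {V : E →L[𝕜] F} {T T' : E →L[𝕜] E} {M M' : F →L[𝕜] F}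

lemma blockOperator_apply (x : F) :
    blockOperator V T M x = V (T ((V†) x)) + M (x - V ((V†) x)) := rfl

@[simp]
lemma blockOperator_one : blockOperator V 1 (1 : F →L[𝕜] F) = 1 := by
  ext x
  simp [blockOperator_apply]

lemma blockOperator_apply_of_adjoint_eq_zero {x : F} (hx : (V†) x = 0) :
    blockOperator V T M x = M x := by
  simp [blockOperator_apply, hx]

lemma blockOperator_apply_map (hV : V† ∘L V = 1) (x : E) :
    blockOperator V T M (V x) = V (T x) := by
  have hVx : (V†) (V x) = x := DFunLike.congr_fun hV x
  simp [blockOperator_apply, hVx]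

lemma blockOperator_mul (hV : V† ∘L V = 1) (hM' : Commute M' (V ∘L V†)) :
    blockOperator V T M * blockOperator V T' M' = blockOperator V (T * T') (M * M') := by
  ext x
  have hVV (y : E) : (V†) (V y) = y := DFunLike.congr_fun hV y
  have hMV (y : F) : M' (V ((V†) y)) = V ((V†) (M' y)) := DFunLike.congr_fun hM'.eq y
  have hker : (V†) (M' (x - V ((V†) x))) = 0 := by
    rw [map_sub, hMV, map_sub, hVV, sub_self]
  simp [blockOperator_apply, hVV, hker, -map_sub]

lemma isSelfAdjoint_comp_adjoint (V : E →L[𝕜] F) : IsSelfAdjoint (V ∘L V†) := by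
  simp [IsSelfAdjoint, ContinuousLinearMap.star_eq_adjoint, ContinuousLinearMap.adjoint_comp]

lemma commute_star_comp_adjoint (hM : Commute M (V ∘L V†)) : Commute (star M) (V ∘L V†) := by
  simpa only [(isSelfAdjoint_comp_adjoint V).star_eq] using hM.star_star

lemma star_blockOperator (hM : Commute M (V ∘L V†)) :
    star (blockOperator V T M) = blockOperator V (star T) (star M) := by
  have hP : star (V ∘L V†) = V ∘L V† := isSelfAdjoint_comp_adjoint V
  have hM' : Commute (1 - V ∘L V†) (star M) :=
    (Commute.one_left _).sub_left (commute_star_comp_adjoint hM).symm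
  have hVT : star (V ∘L T ∘L V†) = V ∘L star T ∘L V† := by
    simp [ContinuousLinearMap.star_eq_adjoint, ContinuousLinearMap.adjoint_comp,
      ContinuousLinearMap.comp_assoc]
  have hMP : star (M * (1 - V ∘L V†)) = star M * (1 - V ∘L V†) := by
    rw [star_mul, star_sub, star_one, hP, hM'.eq]
  exact (star_add _ _).trans (congrArg₂ _ hVT hMP)

lemma blockOperator_mem_unitary (hV : V† ∘L V = 1) (hM : Commute M (V ∘L V†))
    (hTu : T ∈ unitary (E →L[𝕜] E)) (hMu : M ∈ unitary (F →L[𝕜] F)) :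
    blockOperator V T M ∈ unitary (F →L[𝕜] F) := by
  have hM' : Commute (star M) (V ∘L V†) := commute_star_comp_adjoint hM
  rw [Unitary.mem_iff, star_blockOperator hM, blockOperator_mul hV hM, blockOperator_mul hV hM',
    Unitary.star_mul_self_of_mem hTu, Unitary.mul_star_self_of_mem hTu,
    Unitary.star_mul_self_of_mem hMu, Unitary.mul_star_self_of_mem hMu]
  exact ⟨blockOperator_one, blockOperator_one⟩

/-- The unitary representation of `A` that is `T` on the range of the isometry `V` and `M` on its
orthogonal complement. -/
def blockHom {A : Type*} [Monoid A] (hV : V† ∘L V = 1) (T : A →* unitary (E →L[𝕜] E))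
    (M : A →* unitary (F →L[𝕜] F)) (hM : ∀ a, Commute (M a : F →L[𝕜] F) (V ∘L V†)) :
    A →* unitary (F →L[𝕜] F) where
  toFun a := ⟨blockOperator V (T a) (M a),
    blockOperator_mem_unitary hV (hM a) (T a).2 (M a).2⟩
  map_one' := Subtype.ext (by simp)
  map_mul' a a' := Subtype.ext (by simp [blockOperator_mul hV (hM a')])

end BlockOperator

section Synthesis

/-- The unit-vector basis of `ℓ²`. -/
def stdHilbertBasis (𝕜 ι : Type*) [RCLike 𝕜] : HilbertBasis ι 𝕜 ℓ²(ι, 𝕜) :=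
  .ofRepr (.refl 𝕜 _)

variable [CompleteSpace F] {v : ι → F} (hv : Orthonormal 𝕜 v)

/-- The synthesis operator `ℓ² → F`, `c ↦ ∑ i, c i • v i`, of an orthonormal family `v`. -/
def synthesis : ℓ²(ι, 𝕜) →L[𝕜] F :=
  hv.orthogonalFamily.linearIsometry.toContinuousLinearMap

@[simp]
lemma synthesis_stdHilbertBasis (i : ι) : synthesis hv (stdHilbertBasis 𝕜 ι i) = v i := by
  classical
  have hi : stdHilbertBasis 𝕜 ι i = lp.single 2 i (1 : 𝕜) := (stdHilbertBasis 𝕜 ι).repr_self i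
  rw [hi]
  exact (hv.orthogonalFamily.linearIsometry_apply_single (1 : 𝕜)).trans (by simp)

lemma adjoint_synthesis_comp_synthesis : (synthesis hv)† ∘L synthesis hv = 1 :=
  hv.orthogonalFamily.linearIsometry.adjoint_comp_self

lemma adjoint_synthesis_eq_zero {x : F} (hx : ∀ i, inner 𝕜 (v i) x = 0) :
    ((synthesis hv)†) x = 0 := by
  refine (stdHilbertBasis 𝕜 ι).repr.injective (lp.ext (funext fun i => ?_))
  rw [HilbertBasis.repr_apply_apply, ContinuousLinearMap.adjoint_inner_right,
    synthesis_stdHilbertBasis, hx i, map_zero]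
  rfl

lemma isHilbertSchmidt_comp_synthesis [CompleteSpace G] {T : F →L[𝕜] G}
    (hT : Summable fun i => ‖T (v i)‖ ^ 2) : IsHilbertSchmidt (T ∘L synthesis hv) :=
  .of_hilbertBasis (stdHilbertBasis 𝕜 ι) (by simpa using hT)

end Synthesis

end HilbertSpace

section Diagonal

variable {ι : Type*}

lemma orthonormal_circle_smul {F : Type*} [NormedAddCommGroup F] [InnerProductSpace ℂ F]
    {v : ι → F} (hv : Orthonormal ℂ v) (c : ι → Circle) :
    Orthonormal ℂ fun i => (c i : ℂ) • v i :=
  ⟨fun i => by rw [norm_smul, Circle.norm_coe, one_mul, hv.1 i],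
    fun i j hij => by
      change inner ℂ ((c i : ℂ) • v i) ((c j : ℂ) • v j) = 0
      rw [inner_smul_left, inner_smul_right, hv.2 hij, mul_zero, mul_zero]⟩

/-- The multiplication operators on `ℓ²` by families of complex numbers of modulus one. -/
def diagonalOperator : (ι → Circle) →* (ℓ²(ι, ℂ) →L[ℂ] ℓ²(ι, ℂ)) where
  toFun c := synthesis (orthonormal_circle_smul (stdHilbertBasis ℂ ι).orthonormal c)
  map_one' := continuousLinearMap_ext_hilbertBasis (stdHilbertBasis ℂ ι) fun i => by simp
  map_mul' c d := continuousLinearMap_ext_hilbertBasis (stdHilbertBasis ℂ ι) fun i => by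
    simp [smul_smul, mul_comm]

@[simp]
lemma diagonalOperator_stdHilbertBasis (c : ι → Circle) (i : ι) :
    diagonalOperator c (stdHilbertBasis ℂ ι i) = (c i : ℂ) • stdHilbertBasis ℂ ι i :=
  synthesis_stdHilbertBasis (orthonormal_circle_smul (stdHilbertBasis ℂ ι).orthonormal c) i

lemma diagonalOperator_mem_unitary (c : ι → Circle) :
    diagonalOperator c ∈ unitary (ℓ²(ι, ℂ) →L[ℂ] ℓ²(ι, ℂ)) :=
  ((Group.isUnit c).map diagonalOperator).mem_unitary_of_star_mul_self
    (adjoint_synthesis_comp_synthesis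
      (orthonormal_circle_smul (stdHilbertBasis ℂ ι).orthonormal c))

lemma continuous_diagonalOperator_apply {X : Type*} [TopologicalSpace X] {c : X → ι → Circle}
    (hc : ∀ i, Continuous fun t => c t i) (x : ℓ²(ι, ℂ)) :
    Continuous fun t => diagonalOperator (c t) x :=
  continuous_apply_of_hilbertBasis (stdHilbertBasis ℂ ι)
    (T := fun t => (Unitary.linearIsometryEquiv
      ⟨_, diagonalOperator_mem_unitary (c t)⟩).toLinearIsometry)
    (fun i => by
      change Continuous fun t => diagonalOperator (c t) (stdHilbertBasis ℂ ι i)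
      simp only [diagonalOperator_stdHilbertBasis]
      exact (continuous_subtype_val.comp (hc i)).smul continuous_const) x

end Diagonal

section Shift

variable {κ : Type*}

/-- The unilateral shift on `ℓ²(κ × ℕ)`, of multiplicity `κ`. -/
def unilateralShift (κ : Type*) : ℓ²(κ × ℕ, ℂ) →L[ℂ] ℓ²(κ × ℕ, ℂ) :=
  synthesis <| (stdHilbertBasis ℂ (κ × ℕ)).orthonormal.comp (Prod.map id Nat.succ)
    (Function.injective_id.prodMap Nat.succ_injective)

@[simp]
lemma unilateralShift_stdHilbertBasis (i : κ × ℕ) :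
    unilateralShift κ (stdHilbertBasis ℂ (κ × ℕ) i) = stdHilbertBasis ℂ (κ × ℕ) (i.1, i.2 + 1) :=
  synthesis_stdHilbertBasis _ i

lemma adjoint_unilateralShift_comp_unilateralShift :
    (unilateralShift κ)† ∘L unilateralShift κ = 1 :=
  adjoint_synthesis_comp_synthesis _

lemma adjoint_unilateralShift_apply_zero (k : κ) :
    ((unilateralShift κ)†) (stdHilbertBasis ℂ (κ × ℕ) (k, 0)) = 0 :=
  adjoint_synthesis_eq_zero _ fun i =>
    (stdHilbertBasis ℂ (κ × ℕ)).orthonormal.2 fun h => Nat.succ_ne_zero i.2 (congrArg Prod.snd h)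

lemma commute_diagonalOperator_unilateralShift (c : κ → Circle) :
    Commute (diagonalOperator fun i : κ × ℕ => c i.1) (unilateralShift κ) :=
  continuousLinearMap_ext_hilbertBasis (stdHilbertBasis ℂ (κ × ℕ)) fun i => by simp

end Shift
section Perturbation

variable {κ H : Type*} [NormedAddCommGroup H] [InnerProductSpace ℂ H]

lemma norm_symm_sub_inv_smul (S : H ≃ₗᵢ[ℂ] H) (c : Circle) (x : H) :
    ‖S.symm x - ((c⁻¹ : Circle) : ℂ) • x‖ = ‖S x - (c : ℂ) • x‖ :=
  calc ‖S.symm x - ((c⁻¹ : Circle) : ℂ) • x‖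
      = ‖S (S.symm x - ((c⁻¹ : Circle) : ℂ) • x)‖ := (S.norm_map _).symm
    _ = ‖(c : ℂ) • (x - ((c⁻¹ : Circle) : ℂ) • S x)‖ := by
      rw [norm_smul, Circle.norm_coe, one_mul, map_sub, map_smul, S.apply_symm_apply]
    _ = ‖S x - (c : ℂ) • x‖ := by
      rw [smul_sub, smul_smul, ← Circle.coe_mul, mul_inv_cancel, Circle.coe_one, one_smul,
        norm_sub_rev]

variable [CompleteSpace H]
variable {φ : κ × ℕ → H} (hφ : Orthonormal ℂ φ)

/-- The isometry of `H` that maps `φ (k, n)` to `φ (k, n + 1)` and fixes every vector orthogonal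
to the orthonormal family `φ`. -/
def orthonormalShift : H →L[ℂ] H :=
  blockOperator (synthesis hφ) (unilateralShift κ) 1

lemma star_orthonormalShift :
    star (orthonormalShift hφ) = blockOperator (synthesis hφ) (star (unilateralShift κ)) 1 := by
  rw [orthonormalShift, star_blockOperator (Commute.one_left _), star_one]

lemma adjoint_orthonormalShift_comp_orthonormalShift :
    (orthonormalShift hφ)† ∘L orthonormalShift hφ = 1 := by
  change star (orthonormalShift hφ) * orthonormalShift hφ = 1
  rw [star_orthonormalShift, orthonormalShift,
    blockOperator_mul (adjoint_synthesis_comp_synthesis hφ) (Commute.one_left _),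
    show star (unilateralShift κ) * unilateralShift κ = 1 from
      adjoint_unilateralShift_comp_unilateralShift, one_mul, blockOperator_one]

lemma orthonormalShift_eq_one_add : orthonormalShift hφ =
    1 + synthesis hφ ∘L (unilateralShift κ - 1) ∘L (synthesis hφ)† := by
  ext x
  simp [orthonormalShift, blockOperator_apply]
  abel

lemma orthonormalShift_apply_of_inner_eq_zero {x : H} (hx : ∀ i, inner ℂ (φ i) x = 0) :
    orthonormalShift hφ x = x :=
  blockOperator_apply_of_adjoint_eq_zero (adjoint_synthesis_eq_zero hφ hx)

lemma adjoint_orthonormalShift_apply_of_inner_eq_zero {x : H}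
    (hx : ∀ i, inner ℂ (φ i) x = 0) : ((orthonormalShift hφ)†) x = x := by
  rw [← ContinuousLinearMap.star_eq_adjoint, star_orthonormalShift]
  exact blockOperator_apply_of_adjoint_eq_zero (adjoint_synthesis_eq_zero hφ hx)

lemma adjoint_orthonormalShift_apply_zero (k : κ) : ((orthonormalShift hφ)†) (φ (k, 0)) = 0 := by
  rw [← ContinuousLinearMap.star_eq_adjoint, star_orthonormalShift,
    ← synthesis_stdHilbertBasis hφ (k, 0),
    blockOperator_apply_map (adjoint_synthesis_comp_synthesis hφ),
    ContinuousLinearMap.star_eq_adjoint, adjoint_unilateralShift_apply_zero, map_zero]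

/-- The unitary representation by the operators that multiply each `φ (k, n)` by `c k` and fix
every vector orthogonal to the orthonormal family `φ`. -/
def orthonormalDiagonal : (κ → Circle) →* unitary (H →L[ℂ] H) :=
  blockHom (adjoint_synthesis_comp_synthesis hφ)
    ((diagonalOperator.codRestrict _ diagonalOperator_mem_unitary).comp
      (MonoidHom.pi fun i => Pi.evalMonoidHom _ i.1))
    1 fun _ => Commute.one_left _

lemma coe_orthonormalDiagonal (c : κ → Circle) : (orthonormalDiagonal hφ c : H →L[ℂ] H) =
    blockOperator (synthesis hφ) (diagonalOperator fun i => c i.1) 1 := rfl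

lemma orthonormalDiagonal_apply (c : κ → Circle) (i : κ × ℕ) :
    (orthonormalDiagonal hφ c : H →L[ℂ] H) (φ i) = (c i.1 : ℂ) • φ i := by
  rw [coe_orthonormalDiagonal, ← synthesis_stdHilbertBasis hφ i,
    blockOperator_apply_map (adjoint_synthesis_comp_synthesis hφ),
    diagonalOperator_stdHilbertBasis, map_smul]

lemma continuous_orthonormalDiagonal_apply {X : Type*} [TopologicalSpace X]
    {c : X → κ → Circle} (hc : ∀ k, Continuous fun t => c t k) (x : H) :
    Continuous fun t => (orthonormalDiagonal hφ (c t) : H →L[ℂ] H) x := by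
  have hdiag : Continuous fun t =>
      diagonalOperator (fun i => c t i.1) (((synthesis hφ)†) x) :=
    continuous_diagonalOperator_apply (fun i : κ × ℕ => hc i.1) _
  simp only [coe_orthonormalDiagonal, blockOperator_apply]
  exact ((synthesis hφ).continuous.comp hdiag).add continuous_const

lemma commute_orthonormalDiagonal_orthonormalShift (c : κ → Circle) :
    Commute (orthonormalDiagonal hφ c : H →L[ℂ] H) (orthonormalShift hφ) := by
  have hV := adjoint_synthesis_comp_synthesis hφ
  rw [coe_orthonormalDiagonal, orthonormalShift, commute_iff_eq,
    blockOperator_mul hV (Commute.one_left _), blockOperator_mul hV (Commute.one_left _),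
    (commute_diagonalOperator_unilateralShift c).eq]

lemma commute_orthonormalDiagonal_adjoint_orthonormalShift (c : κ → Circle) :
    Commute (orthonormalDiagonal hφ c : H →L[ℂ] H) ((orthonormalShift hφ)†) := by
  have h := commute_orthonormalDiagonal_orthonormalShift hφ c⁻¹
  rw [map_inv, ← Unitary.star_eq_inv, Unitary.coe_star] at h
  exact commute_star_comm.mp h

/-- For a unitary `S` and `c : κ → Circle`, the unitary `R S R* + M (1 - R R*)`, where `R` is
`orthonormalShift hφ` and `M` is `orthonormalDiagonal hφ c`: it has the eigenvectors `φ (k, 0)`,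
with eigenvalues `c k`, and the range of `R` carries a copy of `S`. -/
def perturbedUnitary : (κ → Circle) × (H ≃ₗᵢ[ℂ] H) →* (H ≃ₗᵢ[ℂ] H) :=
  Unitary.linearIsometryEquiv.toMonoidHom.comp <|
    blockHom (adjoint_orthonormalShift_comp_orthonormalShift hφ)
      (Unitary.linearIsometryEquiv.symm.toMonoidHom.comp (MonoidHom.snd _ _))
      ((orthonormalDiagonal hφ).comp (MonoidHom.fst _ _))
      fun a => (commute_orthonormalDiagonal_orthonormalShift hφ a.1).mul_right
        (commute_orthonormalDiagonal_adjoint_orthonormalShift hφ a.1)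

lemma perturbedUnitary_apply (c : κ → Circle) (S : H ≃ₗᵢ[ℂ] H) (x : H) :
    perturbedUnitary hφ (c, S) x =
      orthonormalShift hφ (S (((orthonormalShift hφ)†) x)) +
        (orthonormalDiagonal hφ c : H →L[ℂ] H)
          (x - orthonormalShift hφ (((orthonormalShift hφ)†) x)) := rfl

theorem perturbedUnitary_apply_zero (c : κ → Circle) (S : H ≃ₗᵢ[ℂ] H) (k : κ) :
    perturbedUnitary hφ (c, S) (φ (k, 0)) = (c k : ℂ) • φ (k, 0) := by
  simp [perturbedUnitary_apply, adjoint_orthonormalShift_apply_zero, orthonormalDiagonal_apply]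

theorem perturbedUnitary_apply_of_inner_eq_zero (c : κ → Circle) {S : H ≃ₗᵢ[ℂ] H} {x : H}
    (hx : ∀ i, inner ℂ (φ i) x = 0) (hSx : ∀ i, inner ℂ (φ i) (S x) = 0) :
    perturbedUnitary hφ (c, S) x = S x := by
  rw [perturbedUnitary_apply, adjoint_orthonormalShift_apply_of_inner_eq_zero hφ hx,
    orthonormalShift_apply_of_inner_eq_zero hφ hx, orthonormalShift_apply_of_inner_eq_zero hφ hSx,
    sub_self, map_zero, add_zero]

theorem continuous_perturbedUnitary_apply {X : Type*} [TopologicalSpace X]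
    {c : X → κ → Circle} (hc : ∀ k, Continuous fun t => c t k)
    {S : X → H ≃ₗᵢ[ℂ] H} (hS : ∀ y, Continuous fun t => S t y) (x : H) :
    Continuous fun t => perturbedUnitary hφ (c t, S t) x := by
  simp only [perturbedUnitary_apply]
  exact ((orthonormalShift hφ).continuous.comp (hS _)).add
    (continuous_orthonormalDiagonal_apply hφ hc _)

lemma perturbedUnitary_sub (c : κ → Circle) (S : H ≃ₗᵢ[ℂ] H) {X : H →L[ℂ] H}
    (hX : X = (S : H →L[ℂ] H) - (orthonormalDiagonal hφ c : H →L[ℂ] H)) :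
    (perturbedUnitary hφ (c, S) : H →L[ℂ] H) - (S : H →L[ℂ] H) =
      (orthonormalShift hφ - 1) * X * star (orthonormalShift hφ) +
        X * star (orthonormalShift hφ - 1) := by
  have hMR := (commute_orthonormalDiagonal_orthonormalShift hφ c).eq
  have hU : (perturbedUnitary hφ (c, S) : H →L[ℂ] H) =
      orthonormalShift hφ * (S : H →L[ℂ] H) * star (orthonormalShift hφ) +
        (orthonormalDiagonal hφ c : H →L[ℂ] H) *
          (1 - orthonormalShift hφ * star (orthonormalShift hφ)) := rfl
  rw [hU, hX, mul_sub, mul_one, ← mul_assoc, hMR, star_sub, star_one]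
  noncomm_ring

theorem isHilbertSchmidt_perturbedUnitary_sub (c : κ → Circle) (S : H ≃ₗᵢ[ℂ] H)
    (h : Summable fun i => ‖S (φ i) - (c i.1 : ℂ) • φ i‖ ^ 2) :
    IsHilbertSchmidt ((perturbedUnitary hφ (c, S) : H →L[ℂ] H) - (S : H →L[ℂ] H)) := by
  set V := synthesis hφ
  set X : H →L[ℂ] H := (S : H →L[ℂ] H) - (orthonormalDiagonal hφ c : H →L[ℂ] H) with hX
  have hXV : IsHilbertSchmidt (X ∘L V) := isHilbertSchmidt_comp_synthesis hφ <| by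
    simpa [hX, orthonormalDiagonal_apply] using h
  have hVX : IsHilbertSchmidt (V† ∘L X) := by
    have : IsHilbertSchmidt (X† ∘L V) := isHilbertSchmidt_comp_synthesis hφ <| by
      have hX' : X† = (S.symm : H →L[ℂ] H) - (orthonormalDiagonal hφ c⁻¹ : H →L[ℂ] H) := by
        rw [hX, map_sub, LinearIsometryEquiv.adjoint_eq_symm, map_inv, ← Unitary.star_eq_inv,
          Unitary.coe_star, ContinuousLinearMap.star_eq_adjoint]
      refine h.congr fun i => ?_
      rw [← norm_symm_sub_inv_smul S (c i.1) (φ i), hX', sub_apply,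
        orthonormalDiagonal_apply]
      rfl
    simpa only [ContinuousLinearMap.adjoint_comp, ContinuousLinearMap.adjoint_adjoint]
      using this.adjoint
  have hR : orthonormalShift hφ - 1 = V ∘L (unilateralShift κ - 1) ∘L V† := by
    rw [orthonormalShift_eq_one_add, add_sub_cancel_left]
  have hR' : star (orthonormalShift hφ - 1) = V ∘L (unilateralShift κ - 1)† ∘L V† := by
    rw [hR]
    simp [ContinuousLinearMap.star_eq_adjoint, ContinuousLinearMap.adjoint_comp,
      ContinuousLinearMap.comp_assoc]
  rw [perturbedUnitary_sub hφ c S hX, hR']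
  nth_rw 1 [hR]
  exact ((hVX.comp_clm ((orthonormalShift hφ)†)).clm_comp (V ∘L (unilateralShift κ - 1))).add
    (hXV.comp_clm ((unilateralShift κ - 1)† ∘L V†))

end Perturbation
lemma norm_indicatorConstLp_two_one_sq {α : Type*} [MeasurableSpace α] {μ : Measure α}
    {s : Set α} (hs : MeasurableSet s) (hμs : μ s ≠ ⊤) :
    ‖indicatorConstLp 2 hs hμs (1 : ℂ)‖ ^ 2 = μ.real s := by
  rw [norm_indicatorConstLp two_ne_zero ENNReal.ofNat_ne_top, norm_one, one_mul,
    ENNReal.toReal_ofNat, ← Real.sqrt_eq_rpow, Real.sq_sqrt measureReal_nonneg]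

section CutoffCharacter

lemma memLp_indicator_character (ξ a b : ℝ) :
    MemLp ((Set.Ico a b).indicator fun x => (Circle.exp (-(ξ * x)) : ℂ)) 2 volume :=
  (memLp_indicator_iff_restrict measurableSet_Ico).mpr <|
    MemLp.of_bound (by fun_prop) 1 (.of_forall fun _ => (Circle.norm_coe _).le)

/-- The character `x ↦ exp (-i ξ x)` cut off to the interval `[a, b)`, as an element of
`L²(ℝ)`. -/
def cutoffCharacter (ξ a b : ℝ) : Lp ℂ 2 (volume : Measure ℝ) :=
  (memLp_indicator_character ξ a b).toLp

lemma coeFn_cutoffCharacter (ξ a b : ℝ) : cutoffCharacter ξ a b =ᵐ[volume]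
    (Set.Ico a b).indicator fun x => (Circle.exp (-(ξ * x)) : ℂ) :=
  (memLp_indicator_character ξ a b).coeFn_toLp

lemma norm_cutoffCharacter_sq (ξ : ℝ) {a b : ℝ} (hab : a ≤ b) :
    ‖cutoffCharacter ξ a b‖ ^ 2 = b - a := by
  have hfin : volume (Set.Ico a b) ≠ ⊤ := measure_Ico_lt_top.ne
  have hnorm : ∀ᵐ x, ‖cutoffCharacter ξ a b x‖ =
      ‖indicatorConstLp 2 measurableSet_Ico hfin (1 : ℂ) x‖ := by
    filter_upwards [coeFn_cutoffCharacter ξ a b, indicatorConstLp_coeFn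
      (hs := measurableSet_Ico) (hμs := hfin) (c := (1 : ℂ)) (p := 2)] with x hx hx'
    simp only [hx, hx', norm_indicator_eq_indicator_norm, Circle.norm_coe, norm_one]
  calc ‖cutoffCharacter ξ a b‖ ^ 2 = ‖indicatorConstLp 2 measurableSet_Ico hfin (1 : ℂ)‖ ^ 2 :=
        congrArg (· ^ 2) <| le_antisymm
          (Lp.norm_le_norm_of_ae_le (hnorm.mono fun _ => le_of_eq))
          (Lp.norm_le_norm_of_ae_le (hnorm.mono fun _ => ge_of_eq))
    _ = b - a := by
      rw [norm_indicatorConstLp_two_one_sq, Real.volume_real_Ico_of_le hab]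

lemma inner_cutoffCharacter_eq_zero (ξ : ℝ) {a b : ℝ} {f : Lp ℂ 2 (volume : Measure ℝ)}
    (hf : ∀ᵐ x, x ∈ Set.Ico a b → f x = 0) : inner ℂ (cutoffCharacter ξ a b) f = 0 := by
  rw [L2.inner_def]
  refine integral_eq_zero_of_ae ?_
  filter_upwards [hf, coeFn_cutoffCharacter ξ a b] with x hfx hx
  by_cases hmem : x ∈ Set.Ico a b
  · simp [hfx hmem]
  · simp [hx, hmem]

lemma inner_cutoffCharacter_cutoffCharacter_of_disjoint (ξ ξ' : ℝ) {a b a' b' : ℝ}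
    (h : Disjoint (Set.Ico a b) (Set.Ico a' b')) :
    inner ℂ (cutoffCharacter ξ a b) (cutoffCharacter ξ' a' b') = 0 := by
  refine inner_cutoffCharacter_eq_zero ξ ?_
  filter_upwards [coeFn_cutoffCharacter ξ' a' b'] with x hx hmem
  rw [hx, Set.indicator_of_notMem (h.notMem_of_mem_left hmem)]

lemma norm_indicator_character_add_sub_le (ξ a b t x : ℝ) :
    ‖(Set.Ico a b).indicator (fun y => (Circle.exp (-(ξ * y)) : ℂ)) (x + t) -
        (Circle.exp (-(ξ * t)) : ℂ) *
          (Set.Ico a b).indicator (fun y => (Circle.exp (-(ξ * y)) : ℂ)) x‖ ≤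
      (Set.uIcc a (a - t) ∪ Set.uIcc b (b - t)).indicator (fun _ => (1 : ℝ)) x := by
  have hexp : Circle.exp (-(ξ * (x + t))) = Circle.exp (-(ξ * t)) * Circle.exp (-(ξ * x)) := by
    rw [← Circle.exp_add]
    ring_nf
  by_cases hmem : x + t ∈ Set.Ico a b ↔ x ∈ Set.Ico a b
  · refine le_of_eq_of_le ?_ (Set.indicator_nonneg (fun _ _ => zero_le_one) x)
    by_cases hx : x ∈ Set.Ico a b
    · rw [Set.indicator_of_mem hx, Set.indicator_of_mem (hmem.mpr hx), hexp, Circle.coe_mul,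
        sub_self, norm_zero]
    · simp [hx, mt hmem.mp hx]
  · have hnear : x ∈ Set.uIcc a (a - t) ∪ Set.uIcc b (b - t) := by
      simp only [Set.mem_union, Set.mem_uIcc, Set.mem_Ico] at hmem ⊢
      grind
    rw [Set.indicator_of_mem hnear]
    by_cases hx : x ∈ Set.Ico a b
    · rw [Set.indicator_of_mem hx, Set.indicator_of_notMem (by tauto), zero_sub, norm_neg,
        norm_mul, Circle.norm_coe, Circle.norm_coe, one_mul]
    · rw [Set.indicator_of_notMem hx, Set.indicator_of_mem (by tauto), mul_zero, sub_zero,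
        Circle.norm_coe]

theorem norm_sub_smul_cutoffCharacter_sq_le (ξ a b t : ℝ) {f : Lp ℂ 2 (volume : Measure ℝ)}
    (hf : f =ᵐ[volume] fun x => cutoffCharacter ξ a b (x + t)) :
    ‖f - (Circle.exp (-(ξ * t)) : ℂ) • cutoffCharacter ξ a b‖ ^ 2 ≤ 2 * |t| := by
  have hs : MeasurableSet (Set.uIcc a (a - t) ∪ Set.uIcc b (b - t)) :=
    measurableSet_uIcc.union measurableSet_uIcc
  have hfin : volume (Set.uIcc a (a - t) ∪ Set.uIcc b (b - t)) ≠ ⊤ :=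
    (isCompact_uIcc.union isCompact_uIcc).measure_ne_top
  have hle : ‖f - (Circle.exp (-(ξ * t)) : ℂ) • cutoffCharacter ξ a b‖ ≤
      ‖indicatorConstLp 2 hs hfin (1 : ℂ)‖ := by
    refine Lp.norm_le_norm_of_ae_le ?_
    filter_upwards [hf, (measurePreserving_add_right volume t).quasiMeasurePreserving.ae
        (coeFn_cutoffCharacter ξ a b), coeFn_cutoffCharacter ξ a b,
      Lp.coeFn_sub f ((Circle.exp (-(ξ * t)) : ℂ) • cutoffCharacter ξ a b),
      Lp.coeFn_smul (Circle.exp (-(ξ * t)) : ℂ) (cutoffCharacter ξ a b),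
      indicatorConstLp_coeFn (hs := hs) (hμs := hfin) (c := (1 : ℂ)) (p := 2)]
      with x hfx hxt hx hsub hsmul hind
    rw [hsub, Pi.sub_apply, hsmul, Pi.smul_apply, hfx, hxt, hx, hind, smul_eq_mul,
      norm_indicator_eq_indicator_norm, norm_one]
    exact norm_indicator_character_add_sub_le ξ a b t x
  calc ‖f - (Circle.exp (-(ξ * t)) : ℂ) • cutoffCharacter ξ a b‖ ^ 2
      ≤ ‖indicatorConstLp 2 hs hfin (1 : ℂ)‖ ^ 2 := pow_le_pow_left₀ (norm_nonneg _) hle 2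
    _ = volume.real (Set.uIcc a (a - t) ∪ Set.uIcc b (b - t)) :=
      norm_indicatorConstLp_two_one_sq hs hfin
    _ ≤ volume.real (Set.uIcc a (a - t)) + volume.real (Set.uIcc b (b - t)) :=
      measureReal_union_le _ _
    _ = 2 * |t| := by simp [measureReal_def, Real.volume_interval, two_mul]

end CutoffCharacter
section DyadicWave

/-- The `L²`-normalised character of frequency `ξ` cut off to the dyadic interval
`[2 ^ m, 2 ^ (m + 1))`; a translation by `t` spoils its eigenvector property only on a set of
measure `2 |t|`, out of `2 ^ m`. -/
def dyadicWave (ξ : ℝ) (m : ℕ) : Lp ℂ 2 (volume : Measure ℝ) :=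
  ((√(2 ^ m))⁻¹ : ℂ) • cutoffCharacter ξ (2 ^ m) (2 ^ (m + 1))

lemma norm_inv_sqrt_two_pow_sq (m : ℕ) : ‖((√(2 ^ m))⁻¹ : ℂ)‖ ^ 2 = (1 / 2) ^ m := by
  rw [norm_inv, Complex.norm_real, Real.norm_of_nonneg (Real.sqrt_nonneg _), inv_pow,
    Real.sq_sqrt (by positivity), one_div, inv_pow]

lemma norm_dyadicWave (ξ : ℝ) (m : ℕ) : ‖dyadicWave ξ m‖ = 1 := by
  refine (pow_eq_one_iff_of_nonneg (norm_nonneg _) two_ne_zero).mp ?_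
  rw [dyadicWave, norm_smul, mul_pow, norm_inv_sqrt_two_pow_sq,
    norm_cutoffCharacter_sq ξ (pow_le_pow_right₀ one_le_two m.le_succ), pow_succ, mul_two,
    add_sub_cancel_right, ← mul_pow, one_div_mul_cancel two_ne_zero, one_pow]

lemma disjoint_dyadic_Ico {m n : ℕ} (hmn : m ≠ n) :
    Disjoint (Set.Ico ((2 : ℝ) ^ m) (2 ^ (m + 1))) (Set.Ico (2 ^ n) (2 ^ (n + 1))) :=
  (pow_right_mono₀ (one_le_two (α := ℝ))).pairwise_disjoint_on_Ico_succ hmn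

lemma orthonormal_dyadicWave {ι : Type*} (ξ : ι → ℝ) {m : ι → ℕ} (hm : Function.Injective m) :
    Orthonormal ℂ fun i => dyadicWave (ξ i) (m i) :=
  ⟨fun i => norm_dyadicWave (ξ i) (m i), fun i j hij => by
    simp only [dyadicWave, inner_smul_left, inner_smul_right,
      inner_cutoffCharacter_cutoffCharacter_of_disjoint (ξ i) (ξ j)
        (disjoint_dyadic_Ico (hm.ne hij)), mul_zero]⟩

lemma summable_norm_sub_smul_dyadicWave_sq {ι : Type*} (ξ : ι → ℝ) {m : ι → ℕ}
    (hm : Function.Injective m)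
    {S : Lp ℂ 2 (volume : Measure ℝ) ≃ₗᵢ[ℂ] Lp ℂ 2 (volume : Measure ℝ)} {t : ℝ}
    (hS : ∀ η : Lp ℂ 2 (volume : Measure ℝ), S η =ᵐ[volume] fun x => η (x + t)) :
    Summable fun i => ‖S (dyadicWave (ξ i) (m i)) -
      (Circle.exp (-(ξ i * t)) : ℂ) • dyadicWave (ξ i) (m i)‖ ^ 2 := by
  refine .of_nonneg_of_le (fun _ => sq_nonneg _) (fun i => ?_)
    ((summable_geometric_two.comp_injective hm).mul_right (2 * |t|))
  rw [dyadicWave, map_smul, smul_comm, ← smul_sub, norm_smul, mul_pow, norm_inv_sqrt_two_pow_sq]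
  exact mul_le_mul_of_nonneg_left (norm_sub_smul_cutoffCharacter_sq_le _ _ _ _ (hS _))
    (by positivity)

lemma dyadicWave_mem_pastSet (ξ : ℝ) (m : ℕ) : dyadicWave ξ m ∈ pastSet := by
  filter_upwards [ae_restrict_mem measurableSet_Iio, ae_restrict_of_ae (Lp.coeFn_smul
    ((√(2 ^ m))⁻¹ : ℂ) (cutoffCharacter ξ (2 ^ m) (2 ^ (m + 1)))),
    ae_restrict_of_ae (coeFn_cutoffCharacter ξ (2 ^ m) (2 ^ (m + 1)))] with x hneg hsmul hx
  have hmem : x ∉ Set.Ico ((2 : ℝ) ^ m) (2 ^ (m + 1)) := fun h =>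
    (hneg.trans (by positivity)).not_ge h.1
  rw [dyadicWave, hsmul, Pi.smul_apply, hx, Set.indicator_of_notMem hmem, smul_zero, Pi.zero_apply]

lemma inner_dyadicWave_eq_zero (ξ : ℝ) (m : ℕ) {f : Lp ℂ 2 (volume : Measure ℝ)}
    (hf : f ∈ futSet 0) : inner ℂ (dyadicWave ξ m) f = 0 := by
  rw [dyadicWave, inner_smul_left, inner_cutoffCharacter_eq_zero ξ, mul_zero]
  filter_upwards [(ae_restrict_iff' measurableSet_Ioi).mp hf] with x hx hmem
  exact hx (by simpa using lt_of_lt_of_le (by positivity) hmem.1)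

end DyadicWave

section PerturbedShift

lemma inv_eq_apply_neg_of_apply_add {A G : Type*} [AddGroup A] [Group G] {f : A → G}
    (hf : ∀ s t, f (s + t) = f s * f t) (t : A) : (f t)⁻¹ = f (-t) :=
  (map_inv (MonoidHom.mk' (f := fun a : Multiplicative A => f a.toAdd)
    fun a b => hf a.toAdd b.toAdd) (.ofAdd t)).symm

lemma futSet_antitone : Antitone futSet := fun _ _ hst _ hf =>
  ae_restrict_of_ae_restrict_of_subset (Set.Ioi_subset_Ioi (neg_le_neg hst)) hf

lemma mem_futSet_add_of_shift {s t : ℝ} {f g : Lp ℂ 2 (volume : Measure ℝ)} (hf : f ∈ futSet t)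
    (hg : g =ᵐ[volume] fun x => f (x + s)) : g ∈ futSet (t + s) := by
  refine (ae_restrict_iff' measurableSet_Ioi).mpr ?_
  filter_upwards [hg, (measurePreserving_add_right volume s).quasiMeasurePreserving.ae
    ((ae_restrict_iff' measurableSet_Ioi).mp hf)] with x hx hfx hmem
  exact hx.trans (hfx (by simp only [Set.mem_Ioi] at hmem ⊢; linarith))

variable (μ : ℕ → ℝ)

/-- For each frequency `μ k`, a sequence of dyadic waves; all of them live on different dyadic
intervals. -/
def waveFamily (i : ℕ × ℕ) : Lp ℂ 2 (volume : Measure ℝ) :=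
  dyadicWave (μ i.1) (Nat.pair i.1 i.2)

lemma orthonormal_waveFamily : Orthonormal ℂ (waveFamily μ) :=
  orthonormal_dyadicWave (fun i : ℕ × ℕ => μ i.1) Nat.pairEquiv.injective

variable (S : ℝ → (Lp ℂ 2 (volume : Measure ℝ) ≃ₗᵢ[ℂ] Lp ℂ 2 (volume : Measure ℝ)))

/-- The group `U` with `U t = W t * S t`, for the cocycle `W` to be constructed: the perturbation
of `S` that has eigenvectors `waveFamily μ (k, 0)`, with eigenvalues `exp (-i μ_k t)`. -/
def perturbedShift (t : ℝ) : Lp ℂ 2 (volume : Measure ℝ) ≃ₗᵢ[ℂ] Lp ℂ 2 (volume : Measure ℝ) :=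
  perturbedUnitary (orthonormal_waveFamily μ) (fun k => Circle.exp (-(μ k * t)), S t)

variable {S}

lemma perturbedShift_zero (hS0 : S 0 = 1) : perturbedShift μ S 0 = 1 := by
  simp only [perturbedShift, mul_zero, neg_zero, Circle.exp_zero, hS0]
  exact map_one _

lemma perturbedShift_add (hS : ∀ s t, S (s + t) = S s * S t) (s t : ℝ) :
    perturbedShift μ S (s + t) = perturbedShift μ S s * perturbedShift μ S t := by
  simp only [perturbedShift, mul_add, neg_add, Circle.exp_add, hS]
  exact map_mul (perturbedUnitary (orthonormal_waveFamily μ)) (_, S s) (_, S t)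

lemma continuous_perturbedShift_apply (hS : ∀ η, Continuous fun t => S t η)
    (η : Lp ℂ 2 (volume : Measure ℝ)) : Continuous fun t => perturbedShift μ S t η :=
  continuous_perturbedUnitary_apply _ (fun k => by fun_prop) hS η

lemma perturbedShift_apply_of_mem_futSet {t : ℝ} {f : Lp ℂ 2 (volume : Measure ℝ)}
    (hf : f ∈ futSet 0) (hSf : S t f ∈ futSet 0) : perturbedShift μ S t f = S t f :=
  perturbedUnitary_apply_of_inner_eq_zero _ _ (fun _ => inner_dyadicWave_eq_zero _ _ hf)
    fun _ => inner_dyadicWave_eq_zero _ _ hSf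

lemma perturbedShift_neg_apply_waveFamily (t : ℝ) (k : ℕ) :
    perturbedShift μ S (-t) (waveFamily μ (k, 0)) =
      Complex.exp (Complex.I * μ k * t) • waveFamily μ (k, 0) := by
  rw [perturbedShift, perturbedUnitary_apply_zero, Circle.coe_exp]
  congr 2
  push_cast
  ring

lemma isHilbertSchmidt_perturbedShift_sub {t : ℝ}
    (hS : ∀ η : Lp ℂ 2 (volume : Measure ℝ), S t η =ᵐ[volume] fun x => η (x + t)) :
    IsHilbertSchmidt
      ((perturbedShift μ S t : Lp ℂ 2 (volume : Measure ℝ) →L[ℂ] Lp ℂ 2 (volume : Measure ℝ)) -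
        (S t : Lp ℂ 2 (volume : Measure ℝ) →L[ℂ] Lp ℂ 2 (volume : Measure ℝ))) :=
  isHilbertSchmidt_perturbedUnitary_sub _ _ _ <|
    summable_norm_sub_smul_dyadicWave_sq (fun i : ℕ × ℕ => μ i.1) Nat.pairEquiv.injective hS

end PerturbedShift

section PerturbedCocycle

variable (μ : ℕ → ℝ) (S : ℝ → (Lp ℂ 2 (volume : Measure ℝ) ≃ₗᵢ[ℂ] Lp ℂ 2 (volume : Measure ℝ)))

/-- The multiplicative `S`-cocycle `W` that perturbs `S` into `perturbedShift μ S`. -/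
def perturbedCocycle (t : ℝ) : Lp ℂ 2 (volume : Measure ℝ) ≃ₗᵢ[ℂ] Lp ℂ 2 (volume : Measure ℝ) :=
  (S t).symm.trans (perturbedShift μ S t)

lemma perturbedCocycle_apply (t : ℝ) (η : Lp ℂ 2 (volume : Measure ℝ)) :
    perturbedCocycle μ S t η = perturbedShift μ S t ((S t).symm η) := rfl

lemma perturbedCocycle_apply_apply (t : ℝ) (η : Lp ℂ 2 (volume : Measure ℝ)) :
    perturbedCocycle μ S t (S t η) = perturbedShift μ S t η := by
  rw [perturbedCocycle_apply, LinearIsometryEquiv.symm_apply_apply]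

variable {S}

lemma perturbedCocycle_add (hS : ∀ s t, S (s + t) = S s * S t) (t s : ℝ)
    (η : Lp ℂ 2 (volume : Measure ℝ)) :
    perturbedCocycle μ S (t + s) η =
      perturbedCocycle μ S t (S t (perturbedCocycle μ S s ((S t).symm η))) := by
  have hsymm : (S (t + s)).symm η = (S s).symm ((S t).symm η) := by rw [hS]; rfl
  rw [perturbedCocycle_apply_apply, perturbedCocycle_apply, perturbedCocycle_apply, hsymm,
    perturbedShift_add μ hS, LinearIsometryEquiv.coe_mul, Function.comp_apply]

lemma continuous_perturbedCocycle_apply (hS : ∀ s t, S (s + t) = S s * S t)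
    (hScont : ∀ η, Continuous fun t => S t η) (η : Lp ℂ 2 (volume : Measure ℝ)) :
    Continuous fun t => perturbedCocycle μ S t η := by
  have hsymm (t : ℝ) : (S t).symm = S (-t) := inv_eq_apply_neg_of_apply_add hS t
  simp only [perturbedCocycle_apply, hsymm]
  have hpath : Continuous fun t => S (-t) η := (hScont η).comp continuous_neg
  exact continuous_linearIsometry_apply (T := fun t => (perturbedShift μ S t).toLinearIsometry)
    (continuous_perturbedShift_apply μ hScont) hpath

lemma perturbedCocycle_apply_of_mem_futSet {t : ℝ} (ht : 0 ≤ t)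
    {f : Lp ℂ 2 (volume : Measure ℝ)} (hf : f ∈ futSet t)
    (hS : (S t).symm f =ᵐ[volume] fun x => f (x + -t)) : perturbedCocycle μ S t f = f := by
  have hsymm : (S t).symm f ∈ futSet 0 := by
    simpa only [add_neg_cancel] using mem_futSet_add_of_shift hf hS
  have happly : S t ((S t).symm f) = f := (S t).apply_symm_apply f
  rw [perturbedCocycle_apply, perturbedShift_apply_of_mem_futSet μ hsymm, happly]
  exact happly.symm ▸ futSet_antitone ht hf

lemma summable_norm_perturbedCocycle_sub_sq {ι : Type*} {t : ℝ}
    (hS : ∀ η : Lp ℂ 2 (volume : Measure ℝ), S t η =ᵐ[volume] fun x => η (x + t))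
    {e : ι → Lp ℂ 2 (volume : Measure ℝ)} (he : Orthonormal ℂ e) :
    Summable fun i => ‖perturbedCocycle μ S t (e i) - e i‖ ^ 2 := by
  refine ((isHilbertSchmidt_perturbedShift_sub μ hS).summable
    (he.comp_linearIsometryEquiv (S t).symm)).congr fun i => ?_
  simp [perturbedCocycle_apply]

end PerturbedCocycle

lemma nonempty_hilbertBasis_nat_Lp :
    Nonempty (HilbertBasis ℕ ℂ (Lp ℂ 2 (volume : Measure ℝ))) := by
  have : Fact ((2 : ENNReal) ≠ ⊤) := ⟨ENNReal.ofNat_ne_top⟩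
  exact nonempty_hilbertBasis_nat fun _ =>
    not_finite_iff_infinite.mpr inferInstance
      (orthonormal_waveFamily 0).linearIndependent.finite

/-- Theorem 3.2 / Corollary 3.3: for every sequence `(μ_k)` of reals there
is a Markovian multiplicative `S`-cocycle `W` on `L²(ℝ)` such that each `W_t − I` is
Hilbert–Schmidt and the unitary part of the Wold decomposition of the perturbed isometric
semigroup `(W_{-t} S_{-t}|_{H_{0]}})` has pure point spectrum `{e^{i μ_k t}}`: there is an
orthonormal family `(g_k)` in `H_{0]}` with `W_{-t} S_{-t} g_k = e^{i μ_k t} g_k`. -/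
theorem stmt12
    (S : ℝ → (Lp ℂ 2 (volume : Measure ℝ) ≃ₗᵢ[ℂ] Lp ℂ 2 (volume : Measure ℝ)))
    (hSgrp : ∀ s t : ℝ, ∀ η, S (s + t) η = S s (S t η))
    (hS0 : ∀ η, S 0 η = η)
    (hScont : ∀ η, Continuous fun t : ℝ => S t η)
    (hSae : ∀ (t : ℝ) (η : Lp ℂ 2 (volume : Measure ℝ)),
      (S t η : ℝ → ℂ) =ᵐ[(volume : Measure ℝ)] fun x => η (x + t))
    (μ : ℕ → ℝ) :
    ∃ W : ℝ → (Lp ℂ 2 (volume : Measure ℝ) ≃ₗᵢ[ℂ] Lp ℂ 2 (volume : Measure ℝ)),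
      (∀ η, W 0 η = η) ∧
      (∀ η, Continuous fun t : ℝ => W t η) ∧
      (∀ t s : ℝ, ∀ η, W (t + s) η = W t (S t (W s ((S t).symm η)))) ∧
      (∀ t : ℝ, 0 ≤ t → ∀ f ∈ futSet t, W t f = f) ∧
      (∀ t : ℝ, ∃ e : HilbertBasis ℕ ℂ (Lp ℂ 2 (volume : Measure ℝ)),
        Summable fun i => ‖W t (e i) - e i‖ ^ 2) ∧
      (∃ g : ℕ → Lp ℂ 2 (volume : Measure ℝ),
        Orthonormal ℂ g ∧ (∀ k, g k ∈ pastSet) ∧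
        ∀ t : ℝ, 0 ≤ t → ∀ k : ℕ,
          W (-t) (S (-t) (g k)) = Complex.exp (Complex.I * (μ k : ℂ) * (t : ℂ)) • g k) := by
  have hSadd (s t : ℝ) : S (s + t) = S s * S t := LinearIsometryEquiv.ext (hSgrp s t)
  have hSzero : S 0 = 1 := LinearIsometryEquiv.ext hS0
  have hSsymm (t : ℝ) : (S t).symm = S (-t) := inv_eq_apply_neg_of_apply_add hSadd t
  refine ⟨perturbedCocycle μ S, fun η => ?zero,
    continuous_perturbedCocycle_apply μ hSadd hScont, perturbedCocycle_add μ hSadd,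
    fun t ht f hf => ?markovian, fun t => ?hilbertSchmidt,
    fun k => waveFamily μ (k, 0), (orthonormal_waveFamily μ).comp _ (Prod.mk_left_injective 0),
    fun k => dyadicWave_mem_pastSet _ _, fun t _ k => ?eigenvector⟩
  case zero => rw [perturbedCocycle_apply, perturbedShift_zero μ hSzero, hSzero]; rfl
  case markovian => exact perturbedCocycle_apply_of_mem_futSet μ ht hf (hSsymm t ▸ hSae (-t) f)
  case hilbertSchmidt =>
    obtain ⟨e⟩ := nonempty_hilbertBasis_nat_Lp
    exact ⟨e, summable_norm_perturbedCocycle_sub_sq μ (hSae t) e.orthonormal⟩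
  case eigenvector =>
    rw [perturbedCocycle_apply_apply, perturbedShift_neg_apply_waveFamily]
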